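/- arXiv:1706.07551 — 5 statements merged into one kernel-verified Lean document; each statement's English description precedes it below -/
import Mathlib

section
/- Let β ∈ (0,1) and let V : [0,∞) → ℝ be continuously differentiable. If the Caputo fractional derivative satisfies (D^β V)(t) ≤ 0 for all t ≥ 0, then V(t) ≤ V(0) for all t ≥ 0. -/
open MeasureTheory intervalIntegral

/-- Caputo fractional derivative of order `β` of a real-valued function `g`. -/
noncomputable def caputo (β : ℝ) (g : ℝ → ℝ) (t : ℝ) : ℝ :=
  (1 / Real.Gamma (1 - β)) * ∫ s in (0:ℝ)..t, (t - s) ^ (-β) * deriv g s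

theorem caputo_aux (β : ℝ) (hβ : β ∈ Set.Ioo (0:ℝ) 1) (V : ℝ → ℝ)
    (hV : ContDiff ℝ 1 V) (T : ℝ) (hT : 0 < T)
    (hmax : ∀ s ∈ Set.Icc 0 T, V s ≤ V T) :
    T ^ (-β) * (V T - V 0) ≤ ∫ s in (0:ℝ)..T, (T - s) ^ (-β) * deriv V s := by
  obtain ⟨h0, h1⟩ := hβ
  have hdiff : Differentiable ℝ V := hV.differentiable (by norm_num)
  have hcd : Continuous (deriv V) := hV.continuous_deriv (by norm_num)
  have hint : IntervalIntegrable (fun s => (T - s) ^ (-β) * deriv V s) volume 0 T := by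
    have h := (intervalIntegrable_rpow' (a := T) (b := 0) (r := -β) (by linarith)).comp_sub_left T
    simp only [sub_self, sub_zero] at h
    exact h.mul_continuousOn hcd.continuousOn
  set G : ℝ → ℝ := fun b => (∫ s in (0:ℝ)..b, (T - s) ^ (-β) * deriv V s)
    + (T - b) ^ (-β) * (V T - V b) with hG
  have hcont2 : ContinuousOn (fun b => (T - b) ^ (-β) * (V T - V b)) (Set.Icc 0 T) := by
    intro b hb
    rcases hb.2.lt_or_eq with hlt | rfl
    · apply ContinuousAt.continuousWithinAt
      apply ContinuousAt.mul
      · exact (continuousAt_const.sub continuousAt_id).rpow_const (Or.inl (by simp; linarith))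
      · exact continuousAt_const.sub hdiff.continuous.continuousAt
    · obtain ⟨M, hM⟩ := (isCompact_Icc (a := (0:ℝ)) (b := b)).exists_bound_of_continuousOn
        hcd.continuousOn
      have hM' : ∀ s ∈ Set.Icc 0 b, ‖(b - s) ^ (-β) * (V b - V s)‖ ≤ M * (b - s) ^ (1 - β) := by
        intro s hs
        rcases hs.2.lt_or_eq with hlt | rfl
        · have hp : 0 < b - s := by linarith
          have := (convex_Icc (0:ℝ) b).norm_image_sub_le_of_norm_deriv_le
            (fun x _ => hdiff x) hM hs hb
          rw [norm_mul, Real.norm_of_nonneg (Real.rpow_nonneg hp.le _)]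
          rw [Real.norm_of_nonneg hp.le] at this
          have e : (b - s) ^ (1 - β) = (b - s) ^ (-β) * (b - s) := by
            rw [← Real.rpow_add_one hp.ne']; congr 1; ring
          rw [e]
          have := mul_le_mul_of_nonneg_left this (Real.rpow_nonneg hp.le (-β))
          linarith
        · simp [Real.zero_rpow (show 1 - β ≠ 0 by linarith)]
      have hlim : Filter.Tendsto (fun s => M * (b - s) ^ (1 - β)) (nhdsWithin b (Set.Icc 0 b))
          (nhds 0) := by
        have : Continuous (fun s => M * (b - s) ^ (1 - β)) :=
          continuous_const.mul ((continuous_const.sub continuous_id).rpow_const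
            (fun _ => Or.inr (by linarith)))
        have h := this.continuousWithinAt (s := Set.Icc 0 b) (x := b)
        simpa [ContinuousWithinAt, Real.zero_rpow (show 1 - β ≠ 0 by linarith)] using h
      unfold ContinuousWithinAt
      simp only [sub_self, mul_zero]
      refine squeeze_zero_norm' ?_ hlim
      filter_upwards [self_mem_nhdsWithin] with s hs using hM' s hs
  have hcont : ContinuousOn G (Set.Icc 0 T) := by
    refine ContinuousOn.add ?_ hcont2
    have := continuousOn_primitive_interval' hint (a := 0) Set.left_mem_uIcc
    rwa [Set.uIcc_of_le hT.le] at this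
  have hder : ∀ b ∈ Set.Ioo 0 T, HasDerivAt G (β * (T - b) ^ (-β - 1) * (V T - V b)) b := by
    intro b hb
    have hp : 0 < T - b := by linarith [hb.2]
    have hca : ∀ x < T, ContinuousAt (fun s => (T - s) ^ (-β) * deriv V s) x := fun x hx =>
      ((continuousAt_const.sub continuousAt_id).rpow_const (Or.inl (by simp; linarith))).mul
        hcd.continuousAt
    have d1 : HasDerivAt (fun b => ∫ s in (0:ℝ)..b, (T - s) ^ (-β) * deriv V s)
        ((T - b) ^ (-β) * deriv V b) b := by
      apply integral_hasDerivAt_right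
      · apply hint.mono_set
        rw [Set.uIcc_of_le hb.1.le, Set.uIcc_of_le hT.le]
        exact Set.Icc_subset_Icc le_rfl hb.2.le
      · exact ContinuousAt.stronglyMeasurableAtFilter isOpen_Iio (fun x hx => hca x hx) b hb.2
      · exact hca b hb.2
    have d2 : HasDerivAt (fun b => (T - b) ^ (-β)) (-1 * (-β) * (T - b) ^ (-β - 1)) b :=
      ((hasDerivAt_id b).const_sub T).rpow_const (Or.inl hp.ne')
    have d3 : HasDerivAt (fun b => V T - V b) (-deriv V b) b :=
      (hdiff b).hasDerivAt.const_sub (V T)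
    exact (d1.add (d2.mul d3)).congr_deriv (by ring)
  have hmono : MonotoneOn G (Set.Icc 0 T) := by
    apply monotoneOn_of_deriv_nonneg (convex_Icc 0 T) hcont
    · rw [interior_Icc]
      exact fun b hb => (hder b hb).differentiableAt.differentiableWithinAt
    · rw [interior_Icc]
      intro b hb
      rw [(hder b hb).deriv]
      have := hmax b ⟨hb.1.le, hb.2.le⟩
      have := Real.rpow_nonneg (show 0 ≤ T - b by linarith [hb.2]) (-β - 1)
      exact mul_nonneg (mul_nonneg h0.le this) (by linarith)
  have := hmono (Set.left_mem_Icc.2 hT.le) (Set.right_mem_Icc.2 hT.le) hT.le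
  simpa [hG] using this

/-- If the Caputo fractional derivative of order `β ∈ (0,1)` of a continuously
differentiable function `V` is nonpositive on `[0,∞)`, then `V t ≤ V 0` for all `t ≥ 0`. -/
theorem stmt_0 (β : ℝ) (hβ : β ∈ Set.Ioo (0:ℝ) 1) (V : ℝ → ℝ)
    (hV : ContDiff ℝ 1 V)
    (hD : ∀ t ≥ (0:ℝ), caputo β V t ≤ 0) :
    ∀ t ≥ (0:ℝ), V t ≤ V 0 := by
  intro t ht
  by_contra! hlt
  obtain ⟨T, hT, hmax⟩ := (isCompact_Icc (a := (0:ℝ)) (b := t)).exists_isMaxOn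
    ⟨0, Set.left_mem_Icc.2 ht⟩ hV.continuous.continuousOn
  have hVT : V 0 < V T := hlt.trans_le (hmax (Set.right_mem_Icc.2 ht))
  have hTpos : 0 < T := by
    rcases hT.1.lt_or_eq with h | h
    · exact h
    · rw [← h] at hVT; exact absurd hVT (lt_irrefl _)
  have key := caputo_aux β hβ V hV T hTpos
    (fun s hs => hmax ⟨hs.1, hs.2.trans hT.2⟩)
  have hpos : 0 < T ^ (-β) * (V T - V 0) :=
    mul_pos (Real.rpow_pos_of_pos hTpos _) (by linarith)
  have hΓ : 0 < 1 / Real.Gamma (1 - β) :=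
    one_div_pos.2 (Real.Gamma_pos_of_pos (by linarith [hβ.2]))
  have := hD T hTpos.le
  unfold caputo at this
  have := mul_pos hΓ (hpos.trans_le key)
  linarith
end

section
/- (Lyapunov stability from a nonpositive Caputo derivative, Proposition 2.1.) Let β ∈ (0,1), let x : [0,∞) → ℝⁿ be continuous, let V : [0,∞) → ℝ be continuously differentiable, and let α₁ > 0 and a > 0 satisfy α₁‖x(t)‖^a ≤ V(t) for all t ≥ 0. If the Caputo fractional derivative satisfies (D^β V)(t) ≤ 0 for all t ≥ 0, then ‖x(t)‖ ≤ (V(0)/α₁)^(1/a) for all t ≥ 0, where ‖·‖ is the Euclidean norm. -/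
open MeasureTheory intervalIntegral

theorem key_max (β : ℝ) (hβ : β ∈ Set.Ioo (0:ℝ) 1) (V : ℝ → ℝ) (hV : ContDiff ℝ 1 V)
    (t : ℝ) (ht : 0 < t) (hmax : ∀ s ∈ Set.Icc (0:ℝ) t, V s ≤ V t) :
    t ^ (-β) * (V t - V 0) ≤ ∫ s in (0:ℝ)..t, (t - s) ^ (-β) * deriv V s := by
  obtain ⟨hβ0, hβ1⟩ := hβ
  have hdiff : Differentiable ℝ V := hV.differentiable (by norm_num)
  have hcd : Continuous (deriv V) := hV.continuous_deriv (by norm_num)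
  have hds : ContinuousOn (dslope V t) Set.univ :=
    (continuousOn_dslope Filter.univ_mem).2 ⟨hdiff.continuous.continuousOn, hdiff t⟩
  have hFw : ∀ s, s < t → (t - s) ^ (1 - β) * dslope V t s = (t - s) ^ (-β) * (V t - V s) := by
    intro s hs
    have h0 : 0 < t - s := sub_pos.2 hs
    rw [dslope_of_ne _ hs.ne, slope_def_field, sub_eq_add_neg 1 β, Real.rpow_add h0, Real.rpow_one]
    have : s - t ≠ 0 := by linarith
    field_simp
    ring
  have hcont : ContinuousOn (fun s => (t - s) ^ (1 - β) * dslope V t s) (Set.Icc 0 t) := by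
    apply ContinuousOn.mul
    · apply Continuous.continuousOn
      exact (continuous_const.sub continuous_id).rpow_const (fun _ => Or.inr (by linarith))
    · exact hds.mono (Set.subset_univ _)
  have hint0 : IntervalIntegrable (fun s : ℝ => (t - s) ^ (-β)) volume 0 t := by
    have h := (intervalIntegrable_rpow' (a := t) (b := 0) (r := -β) (by linarith)).comp_sub_left t
    simpa using h
  have hint : IntervalIntegrable (fun s : ℝ => (t - s) ^ (-β) * deriv V s) volume 0 t :=
    hint0.mul_continuousOn hcd.continuousOn
  have hle := integral_le_sub_of_hasDeriv_right_of_le (a := 0) (b := t)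
    (g := fun s => (t - s) ^ (1 - β) * dslope V t s)
    (g' := fun s => (-1 * (-β) * (t - s) ^ (-β - 1)) * (V t - V s) + (t - s) ^ (-β) * (-deriv V s))
    (φ := fun s => - ((t - s) ^ (-β) * deriv V s)) ht.le hcont
    (by
      intro s hs
      have h1 : HasDerivAt (fun s => (t - s) ^ (-β)) (-1 * (-β) * (t - s) ^ (-β - 1)) s :=
        ((hasDerivAt_id s).const_sub t).rpow_const (Or.inl (sub_pos.2 hs.2).ne')
      have h2 : HasDerivAt (fun s => V t - V s) (-deriv V s) s :=
        (hdiff s).hasDerivAt.const_sub (V t)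
      refine ((h1.mul h2).congr_of_eventuallyEq ?_).hasDerivWithinAt
      filter_upwards [Iio_mem_nhds hs.2] with u hu using hFw u hu)
    (by
      rw [← intervalIntegrable_iff_integrableOn_Icc_of_le ht.le]
      exact hint.neg)
    (by
      intro s hs
      have h1 : 0 < t - s := sub_pos.2 hs.2
      have h2 : 0 ≤ V t - V s := sub_nonneg.2 (hmax s ⟨hs.1.le, hs.2.le⟩)
      have h3 : 0 ≤ (-1 * (-β) * (t - s) ^ (-β - 1)) * (V t - V s) := by
        have : 0 ≤ -1 * (-β) := by linarith
        positivity
      linarith)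
  rw [intervalIntegral.integral_neg] at hle
  have h0 := hFw 0 ht
  simp only [sub_self, Real.zero_rpow (by linarith : (1 - β) ≠ 0), zero_mul] at hle
  rw [h0, sub_zero] at hle
  linarith

theorem V_le (β : ℝ) (hβ : β ∈ Set.Ioo (0:ℝ) 1) (V : ℝ → ℝ) (hV : ContDiff ℝ 1 V)
    (hD : ∀ t ≥ (0:ℝ), caputo β V t ≤ 0) (T : ℝ) (hT : 0 ≤ T) : V T ≤ V 0 := by
  obtain ⟨t, ht, hm⟩ := isCompact_Icc.exists_isMaxOn (Set.nonempty_Icc.2 hT)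
    (hV.continuous.continuousOn (s := Set.Icc 0 T))
  have hTt : V T ≤ V t := hm (Set.right_mem_Icc.2 hT)
  rcases ht.1.eq_or_lt with h | h
  · rw [h]; exact hTt
  have hk := key_max β hβ V hV t h (fun s hs => hm ⟨hs.1, hs.2.trans ht.2⟩)
  have hG : 0 < Real.Gamma (1 - β) := Real.Gamma_pos_of_pos (by linarith [hβ.2])
  have hd := hD t h.le
  unfold caputo at hd
  have hI := nonpos_of_mul_nonpos_right hd (by positivity)
  have := nonpos_of_mul_nonpos_right (hk.trans hI) (Real.rpow_pos_of_pos h _)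
  linarith

/-- Lyapunov stability from a nonpositive Caputo derivative (Proposition 2.1):
if `α₁‖x t‖^a ≤ V t` and the Caputo derivative of `V` is nonpositive on `[0,∞)`,
then `‖x t‖ ≤ (V 0 / α₁)^(1/a)` for all `t ≥ 0`. -/
theorem stmt_1 {n : ℕ} (β : ℝ) (hβ : β ∈ Set.Ioo (0:ℝ) 1)
    (x : ℝ → EuclideanSpace ℝ (Fin n)) (hx : Continuous x)
    (V : ℝ → ℝ) (hV : ContDiff ℝ 1 V)
    (α₁ a : ℝ) (hα₁ : 0 < α₁) (ha : 0 < a)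
    (hbound : ∀ t ≥ (0:ℝ), α₁ * ‖x t‖ ^ a ≤ V t)
    (hD : ∀ t ≥ (0:ℝ), caputo β V t ≤ 0) :
    ∀ t ≥ (0:ℝ), ‖x t‖ ≤ (V 0 / α₁) ^ (1 / a) := by
  intro t ht
  have h1 := (hbound t ht).trans (V_le β hβ V hV hD t ht)
  rw [one_div]
  have h2 : ‖x t‖ ^ a ≤ V 0 / α₁ := by
    rw [le_div_iff₀ hα₁, mul_comm]; exact h1
  have h3 : 0 ≤ ‖x t‖ ^ a := by positivity
  exact (Real.le_rpow_inv_iff_of_pos (norm_nonneg _) (h3.trans h2) ha).2 h2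
end

section
/- (QSR dissipativity implies L₂ stability, Theorem 3.3.) Let β ∈ (0,1), q > 0, r ≥ 0, s ≥ 0, let u : [0,∞) → ℝᵖ and y : [0,∞) → ℝᵐ be continuous, and let V : [0,∞) → ℝ be continuously differentiable with V(t) ≥ 0 for all t ≥ 0. Assume the Caputo fractional derivative satisfies (D^β V)(t) ≤ −q‖y(t)‖² + s‖u(t)‖‖y(t)‖ + r‖u(t)‖² for all t ≥ 0, where ‖·‖ is the Euclidean norm. Then for every τ ≥ 0: (q/2)∫₀^τ ‖y(t)‖² dt ≤ (s²/(2q) + r)∫₀^τ ‖u(t)‖² dt + (τ^(1−β)/((1−β)Γ(1−β)))·V(0). -/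
open MeasureTheory intervalIntegral

open Set in
/-- Fubini step: integrability and value of the double integral. -/
lemma caputo_fubini (β τ : ℝ) (hβ : β ∈ Set.Ioo (0:ℝ) 1) (hτ : 0 ≤ τ) (W : ℝ → ℝ)
    (hW : Continuous W) :
    IntervalIntegrable (fun t => ∫ x in (0:ℝ)..t, (t - x) ^ (-β) * W x) volume 0 τ ∧
    ∫ t in (0:ℝ)..τ, (∫ x in (0:ℝ)..t, (t - x) ^ (-β) * W x) =
      ∫ x in (0:ℝ)..τ, (τ - x) ^ (1 - β) / (1 - β) * W x := by
  obtain ⟨h0, h1⟩ := hβ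
  set f : ℝ → ℝ := indicator (Ioc 0 τ) W with hf
  set g : ℝ → ℝ := indicator (Ioc 0 τ) (fun w => w ^ (-β)) with hg
  have hfi : Integrable f volume := by
    rw [hf, integrable_indicator_iff measurableSet_Ioc,
      ← intervalIntegrable_iff_integrableOn_Ioc_of_le hτ]
    exact hW.intervalIntegrable _ _
  have hgi : Integrable g volume := by
    rw [hg, integrable_indicator_iff measurableSet_Ioc,
      ← intervalIntegrable_iff_integrableOn_Ioc_of_le hτ]
    exact intervalIntegrable_rpow' (by linarith)
  have hprod : Integrable (fun p : ℝ × ℝ => f p.2 * g (p.1 - p.2))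
      ((volume : Measure ℝ).prod volume) := by
    simpa using hfi.convolution_integrand (ContinuousLinearMap.mul ℝ ℝ) hgi
  have hprod' : Integrable (fun p : ℝ × ℝ => f p.2 * g (p.1 - p.2))
      ((volume.restrict (Ioc 0 τ)).prod volume) :=
    hprod.mono_measure (Measure.prod_mono Measure.restrict_le_self le_rfl)
  have hA : ∀ t ∈ Ioc 0 τ, ∫ x, f x * g (t - x) = ∫ x in (0:ℝ)..t, (t - x) ^ (-β) * W x := by
    intro t ht
    have : (fun x => f x * g (t - x)) =
        indicator (Ioo 0 t) (fun x => (t - x) ^ (-β) * W x) := by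
      funext x
      by_cases hx : x ∈ Ioo 0 t
      · have a1 : x ∈ Ioc 0 τ := ⟨hx.1, by linarith [hx.2, ht.2]⟩
        have a2 : t - x ∈ Ioc 0 τ := ⟨by linarith [hx.2], by linarith [hx.1, ht.2]⟩
        rw [hf, hg, indicator_of_mem a1, indicator_of_mem a2, indicator_of_mem hx, mul_comm]
      · rw [indicator_of_notMem hx]
        by_cases a1 : x ∈ Ioc 0 τ
        · have a2 : t - x ∉ Ioc 0 τ := fun h => hx ⟨a1.1, by linarith [h.1]⟩
          rw [hg, indicator_of_notMem a2, mul_zero]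
        · rw [hf, indicator_of_notMem a1, zero_mul]
    rw [this, MeasureTheory.integral_indicator measurableSet_Ioo, integral_of_le ht.1.le,
      integral_Ioc_eq_integral_Ioo]
  have hB : ∀ x, ∫ t in Ioc 0 τ, f x * g (t - x) =
      indicator (Ioc 0 τ) (fun x => (τ - x) ^ (1 - β) / (1 - β) * W x) x := by
    intro x
    by_cases hx : x ∈ Ioc 0 τ
    · rw [indicator_of_mem hx, hf, indicator_of_mem hx, MeasureTheory.integral_const_mul,
        ← integral_of_le hτ, intervalIntegral.integral_comp_sub_right,
        integral_of_le (by linarith), hg, setIntegral_indicator measurableSet_Ioc]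
      have : Ioc (0 - x) (τ - x) ∩ Ioc 0 τ = Ioc 0 (τ - x) := by
        ext w
        simp only [mem_inter_iff, mem_Ioc]
        constructor
        · rintro ⟨⟨a, b⟩, c, d⟩; exact ⟨c, b⟩
        · rintro ⟨a, b⟩; exact ⟨⟨by linarith [hx.1], b⟩, a, by linarith [hx.1]⟩
      rw [this, ← integral_of_le (by linarith [hx.2]), integral_rpow (Or.inl (by linarith)),
        Real.zero_rpow (by linarith), sub_zero, show -β + 1 = 1 - β by ring, mul_comm]
    · rw [indicator_of_notMem hx, hf, indicator_of_notMem hx]; simp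
  constructor
  · rw [intervalIntegrable_iff_integrableOn_Ioc_of_le hτ]
    exact (integrableOn_congr_fun hA measurableSet_Ioc).1 hprod'.integral_prod_left
  · rw [integral_of_le hτ, ← setIntegral_congr_fun measurableSet_Ioc hA,
      integral_integral_swap hprod']
    simp_rw [hB]
    rw [MeasureTheory.integral_indicator measurableSet_Ioc, integral_of_le hτ]

/-- Lower bound for the integrated fractional kernel, by parts. -/
lemma caputo_parts (β τ : ℝ) (hβ : β ∈ Set.Ioo (0:ℝ) 1) (hτ : 0 ≤ τ) (V : ℝ → ℝ)
    (hV : ContDiff ℝ 1 V) (hVpos : ∀ t ≥ (0:ℝ), 0 ≤ V t) :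
    -(τ ^ (1 - β) / (1 - β) * V 0) ≤
      ∫ x in (0:ℝ)..τ, (τ - x) ^ (1 - β) / (1 - β) * deriv V x := by
  obtain ⟨h0, h1⟩ := hβ
  have hne : (1 - β) ≠ 0 := by linarith
  have hW : Continuous (deriv V) := hV.continuous_deriv le_rfl
  have hint : IntervalIntegrable (fun x : ℝ => -(τ - x) ^ (-β)) volume 0 τ := by
    have : IntervalIntegrable (fun x : ℝ => x ^ (-β)) volume τ 0 :=
      intervalIntegrable_rpow' (by linarith)
    have := (this.comp_sub_left τ).neg
    simp only [sub_self, sub_zero] at this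
    exact this
  rw [integral_mul_deriv_eq_deriv_mul_of_hasDerivAt (v := V)
    (u' := fun x : ℝ => -(τ - x) ^ (-β)) _ hV.continuous.continuousOn _ _ hint
    (hW.intervalIntegrable _ _)]
  · have hpos : 0 ≤ ∫ x in (0:ℝ)..τ, (τ - x) ^ (-β) * V x := by
      apply intervalIntegral.integral_nonneg hτ
      intro x hx
      exact mul_nonneg (Real.rpow_nonneg (by linarith [hx.2]) _) (hVpos x hx.1)
    simp only [neg_mul, intervalIntegral.integral_neg, sub_self, Real.zero_rpow hne, sub_zero,
      zero_div, zero_mul]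
    linarith
  · apply Continuous.continuousOn
    exact ((continuous_const.sub continuous_id).rpow_const
      (fun _ => Or.inr (by simp; linarith))).div_const _
  · intro x hx
    rw [min_eq_left hτ, max_eq_right hτ] at hx
    have h := (((hasDerivAt_id x).const_sub τ).rpow_const (p := 1 - β)
      (Or.inl (by simp; linarith [hx.2]))).div_const (1 - β)
    convert h using 1
    simp only [id]
    rw [show 1 - β - 1 = -β by ring]
    field_simp
    rfl
  · intro x _
    exact (hV.differentiable (by norm_num) x).hasDerivAt

/-- QSR dissipativity implies L₂ stability (Theorem 3.3). -/
theorem stmt_3 {p m : ℕ} (β q r s : ℝ) (hβ : β ∈ Set.Ioo (0:ℝ) 1)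
    (hq : 0 < q) (hr : 0 ≤ r) (hs : 0 ≤ s)
    (u : ℝ → EuclideanSpace ℝ (Fin p)) (y : ℝ → EuclideanSpace ℝ (Fin m))
    (hu : Continuous u) (hy : Continuous y)
    (V : ℝ → ℝ) (hV : ContDiff ℝ 1 V) (hVpos : ∀ t ≥ (0:ℝ), 0 ≤ V t)
    (hdiss : ∀ t ≥ (0:ℝ),
      caputo β V t ≤ -q * ‖y t‖ ^ 2 + s * ‖u t‖ * ‖y t‖ + r * ‖u t‖ ^ 2) :
    ∀ τ ≥ (0:ℝ),
      (q / 2) * ∫ t in (0:ℝ)..τ, ‖y t‖ ^ 2 ≤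
        (s ^ 2 / (2 * q) + r) * (∫ t in (0:ℝ)..τ, ‖u t‖ ^ 2)
          + (τ ^ (1 - β) / ((1 - β) * Real.Gamma (1 - β))) * V 0 := by
  intro τ hτ
  obtain ⟨hI, hE⟩ := caputo_fubini β τ hβ hτ (deriv V) (hV.continuous_deriv le_rfl)
  have hP := caputo_parts β τ hβ hτ V hV hVpos
  have hG : 0 < Real.Gamma (1 - β) := Real.Gamma_pos_of_pos (by linarith [hβ.2])
  have hyI : IntervalIntegrable (fun t => ‖y t‖ ^ 2) volume 0 τ :=
    (hy.norm.pow 2).intervalIntegrable _ _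
  have huI : IntervalIntegrable (fun t => ‖u t‖ ^ 2) volume 0 τ :=
    (hu.norm.pow 2).intervalIntegrable _ _
  have hmono : ∫ t in (0:ℝ)..τ, caputo β V t ≤
      ∫ t in (0:ℝ)..τ, ((s ^ 2 / (2 * q) + r) * ‖u t‖ ^ 2 - q / 2 * ‖y t‖ ^ 2) := by
    apply intervalIntegral.integral_mono_on hτ
    · exact hI.const_mul _
    · exact (huI.const_mul _).sub (hyI.const_mul _)
    · intro t ht
      refine (hdiss t ht.1).trans ?_
      have key : s ^ 2 / (2 * q) * ‖u t‖ ^ 2 - q / 2 * ‖y t‖ ^ 2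
          - (-q * ‖y t‖ ^ 2 + s * ‖u t‖ * ‖y t‖) =
          (s * ‖u t‖ - q * ‖y t‖) ^ 2 / (2 * q) := by
        field_simp
        ring
      have : 0 ≤ (s * ‖u t‖ - q * ‖y t‖) ^ 2 / (2 * q) := by positivity
      linarith
  rw [intervalIntegral.integral_sub (huI.const_mul _) (hyI.const_mul _),
    intervalIntegral.integral_const_mul, intervalIntegral.integral_const_mul] at hmono
  have hlow : -(τ ^ (1 - β) / ((1 - β) * Real.Gamma (1 - β)) * V 0) ≤
      ∫ t in (0:ℝ)..τ, caputo β V t := by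
    simp only [caputo]
    rw [intervalIntegral.integral_const_mul, hE]
    calc _ = 1 / Real.Gamma (1 - β) * (-(τ ^ (1 - β) / (1 - β) * V 0)) := by
          rw [mul_comm (1 - β), ← div_div]; ring
      _ ≤ _ := mul_le_mul_of_nonneg_left hP (by positivity)
  linarith
end

section
/- (Integral form of passivity, Proposition 3.9.) Let β ∈ (0,1), let w : [0,∞) → ℝ be continuous, and let V : [0,∞) → ℝ be continuously differentiable with V(t) ≥ 0 for all t ≥ 0. If the Caputo fractional derivative satisfies (D^β V)(t) ≤ w(t) for all t ≥ 0, then for every τ > 0: ∫₀^τ w(t) dt ≥ −(τ^(1−β)/((1−β)Γ(1−β)))·V(0). In particular, if V(0) = 0 then ∫₀^τ w(t) dt ≥ 0 for all τ ≥ 0. -/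
open MeasureTheory intervalIntegral

theorem aux_6 (β : ℝ) (hβ : β ∈ Set.Ioo (0:ℝ) 1)
    (w : ℝ → ℝ) (hw : Continuous w)
    (V : ℝ → ℝ) (hV : ContDiff ℝ 1 V) (hVpos : ∀ t ≥ (0:ℝ), 0 ≤ V t)
    (hp : ∀ t ≥ (0:ℝ), caputo β V t ≤ w t) (τ : ℝ) (hτ : 0 < τ) :
      -(τ ^ (1 - β) / ((1 - β) * Real.Gamma (1 - β))) * V 0 ≤ ∫ t in (0:ℝ)..τ, w t := by
  obtain ⟨hβ0, hβ1⟩ := hβ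
  have hG : 0 < Real.Gamma (1 - β) := Real.Gamma_pos_of_pos (by linarith)
  have hdc : Continuous (deriv V) := hV.continuous_deriv le_rfl
  have hd : Differentiable ℝ V := hV.differentiable one_ne_zero
  set μ : Measure ℝ := volume.restrict (Set.Ioc 0 τ) with hμ
  have hpow : IntervalIntegrable (fun r : ℝ => r ^ (-β)) volume 0 τ :=
    intervalIntegral.intervalIntegrable_rpow' (by linarith)
  have hpowμ : Integrable (fun r : ℝ => r ^ (-β)) μ :=
    (intervalIntegrable_iff_integrableOn_Ioc_of_le hτ.le).1 hpow
  obtain ⟨M, hM⟩ := (isCompact_Icc (a := (0:ℝ)) (b := τ)).exists_bound_of_continuousOn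
    hdc.continuousOn
  have hM0 : 0 ≤ M := (norm_nonneg _).trans (hM 0 ⟨le_rfl, hτ.le⟩)
  let H : ℝ × ℝ → ℝ := Set.indicator {p : ℝ × ℝ | p.2 ≤ p.1} (fun p => deriv V (p.1 - p.2))
  let F : ℝ × ℝ → ℝ := fun p => H p * p.2 ^ (-β)
  have hHm : Measurable H := by
    apply Measurable.indicator
    · exact (hdc.comp (continuous_fst.sub continuous_snd)).measurable
    · exact measurableSet_le measurable_snd measurable_fst
  have hF : Integrable F (μ.prod μ) := by
    have h1 : Integrable (fun p : ℝ × ℝ => p.2 ^ (-β)) (μ.prod μ) := by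
      have := (integrable_const (μ := μ) (1:ℝ)).mul_prod hpowμ
      simpa using this
    refine h1.bdd_mul (c := M) hHm.aestronglyMeasurable ?_
    rw [hμ, Measure.prod_restrict]
    refine ae_restrict_of_forall_mem (measurableSet_Ioc.prod measurableSet_Ioc) ?_
    rintro ⟨t, r⟩ ⟨ht, hr⟩
    simp only [H, Set.indicator_apply, Set.mem_ofPred_eq]
    simp only [Set.mem_Ioc] at ht hr
    split_ifs with h
    · exact hM _ ⟨by linarith, by linarith⟩
    · simpa using hM0
  have hin1 : ∀ t ∈ Set.Ioc 0 τ, ∫ r, F (t, r) ∂μ =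
      ∫ s in (0:ℝ)..t, (t - s) ^ (-β) * deriv V s := by
    intro t ht
    have e1 : (fun r => F (t, r)) =
        Set.indicator (Set.Iic t) (fun r => deriv V (t - r) * r ^ (-β)) := by
      ext r
      simp only [F, H, Set.indicator_apply, Set.mem_ofPred_eq, Set.mem_Iic]
      split_ifs <;> simp
    rw [e1, hμ, setIntegral_indicator measurableSet_Iic, Set.Ioc_inter_Iic, min_eq_right ht.2,
      ← intervalIntegral.integral_of_le ht.1.le]
    have := intervalIntegral.integral_comp_sub_left (a := 0) (b := t)
      (fun s => (t - s) ^ (-β) * deriv V s) t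
    simp only [sub_self, sub_zero] at this
    rw [← this]
    congr 1
    ext r
    rw [sub_sub_cancel, mul_comm]
  have hin2 : ∀ r ∈ Set.Ioc 0 τ, ∫ t, F (t, r) ∂μ = (V (τ - r) - V 0) * r ^ (-β) := by
    intro r hr
    have e1 : (fun t => F (t, r)) =
        Set.indicator (Set.Ici r) (fun t => deriv V (t - r) * r ^ (-β)) := by
      ext t
      simp only [F, H, Set.indicator_apply, Set.mem_ofPred_eq, Set.mem_Ici]
      split_ifs <;> simp
    have e2 : Set.Ioc 0 τ ∩ Set.Ici r = Set.Icc r τ := by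
      ext x
      simp only [Set.mem_inter_iff, Set.mem_Ioc, Set.mem_Ici, Set.mem_Icc]
      constructor
      · rintro ⟨⟨_, h⟩, h'⟩; exact ⟨h', h⟩
      · rintro ⟨h', h⟩; exact ⟨⟨lt_of_lt_of_le hr.1 h', h⟩, h'⟩
    rw [e1, hμ, setIntegral_indicator measurableSet_Ici, e2, integral_Icc_eq_integral_Ioc,
      ← intervalIntegral.integral_of_le hr.2, intervalIntegral.integral_mul_const,
      intervalIntegral.integral_comp_sub_right (fun x => deriv V x) r, sub_self,
      intervalIntegral.integral_deriv_eq_sub (fun x _ => hd x) (hdc.intervalIntegrable _ _)]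
  have hswap : ∫ t, ∫ r, F (t, r) ∂μ ∂μ = ∫ r, ∫ t, F (t, r) ∂μ ∂μ :=
    integral_integral_swap (f := fun t r => F (t, r)) hF
  have hlow : -(τ ^ (1 - β) / (1 - β)) * V 0 ≤ ∫ r, ∫ t, F (t, r) ∂μ ∂μ := by
    have h1 : ∫ r, (- V 0) * r ^ (-β) ∂μ = -(τ ^ (1 - β) / (1 - β)) * V 0 := by
      rw [MeasureTheory.integral_const_mul, hμ, ← intervalIntegral.integral_of_le hτ.le,
        integral_rpow (Or.inl (by linarith)), Real.zero_rpow (by linarith)]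
      rw [show -β + 1 = 1 - β by ring]
      ring
    rw [← h1]
    refine integral_mono_ae (hpowμ.const_mul _) hF.integral_prod_right ?_
    refine ae_restrict_of_forall_mem measurableSet_Ioc ?_
    intro r hr
    show _ ≤ ∫ t, F (t, r) ∂μ
    rw [hin2 r hr]
    have := hVpos (τ - r) (by linarith [hr.2])
    exact mul_le_mul_of_nonneg_right (by linarith) (Real.rpow_nonneg hr.1.le _)
  have hup : (1 / Real.Gamma (1 - β)) * ∫ t, ∫ r, F (t, r) ∂μ ∂μ ≤ ∫ t in (0:ℝ)..τ, w t := by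
    rw [intervalIntegral.integral_of_le hτ.le, ← MeasureTheory.integral_const_mul]
    refine integral_mono_ae (hF.integral_prod_left.const_mul _)
      ((intervalIntegrable_iff_integrableOn_Ioc_of_le hτ.le).1 (hw.intervalIntegrable _ _)) ?_
    refine ae_restrict_of_forall_mem measurableSet_Ioc ?_
    intro t ht
    show _ * ∫ r, F (t, r) ∂μ ≤ _
    rw [hin1 t ht]
    exact hp t ht.1.le
  refine le_trans ?_ hup
  rw [hswap]
  refine le_trans (le_of_eq ?_) (mul_le_mul_of_nonneg_left hlow (one_div_pos.2 hG).le)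
  have : (1 - β) ≠ 0 := by linarith
  field_simp

/-- Integral form of passivity (Proposition 3.9): if `D^β V ≤ w` on `[0,∞)` and `V ≥ 0`,
then `∫₀^τ w ≥ −(τ^(1−β)/((1−β)Γ(1−β)))·V 0`; moreover if `V 0 = 0` then `∫₀^τ w ≥ 0`. -/
theorem stmt_6 (β : ℝ) (hβ : β ∈ Set.Ioo (0:ℝ) 1)
    (w : ℝ → ℝ) (hw : Continuous w)
    (V : ℝ → ℝ) (hV : ContDiff ℝ 1 V) (hVpos : ∀ t ≥ (0:ℝ), 0 ≤ V t)
    (hp : ∀ t ≥ (0:ℝ), caputo β V t ≤ w t) :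
    (∀ τ > (0:ℝ),
      -(τ ^ (1 - β) / ((1 - β) * Real.Gamma (1 - β))) * V 0 ≤ ∫ t in (0:ℝ)..τ, w t) ∧
    (V 0 = 0 → ∀ τ ≥ (0:ℝ), 0 ≤ ∫ t in (0:ℝ)..τ, w t) := by
  have key := aux_6 β hβ w hw V hV hVpos hp
  refine ⟨key, fun h0 τ hτ => ?_⟩
  rcases eq_or_lt_of_le hτ with h | h
  · rw [← h]; simp
  · simpa [h0] using key τ h
end

section
/- (Passivity of a fractional order mass–spring–damper system, Example 2.) Let β ∈ (0,1), a > 0, k > 0, let x₁, x₂ : [0,∞) → ℝ be continuously differentiable, and let u : [0,∞) → ℝ be continuous, such that the Caputo fractional derivatives satisfy (D^β x₁)(t) = x₂(t) and (D^β x₂)(t) = −a·x₁(t) − k·x₂(t) + u(t) for all t ≥ 0. Then the storage function V(t) = (1/2)·a·x₁(t)² + (1/2)·x₂(t)² satisfies the passivity inequality (D^β V)(t) ≤ u(t)·x₂(t) for all t ≥ 0. -/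
open MeasureTheory intervalIntegral

lemma kernel_int (β : ℝ) (hβ : β ∈ Set.Ioo (0:ℝ) 1) (t : ℝ) (f : ℝ → ℝ)
    (hf : Continuous f) :
    IntervalIntegrable (fun s => (t - s) ^ (-β) * f s) volume 0 t := by
  have h1 : IntervalIntegrable (fun s : ℝ => s ^ (-β)) volume 0 t :=
    intervalIntegral.intervalIntegrable_rpow' (by linarith [hβ.2])
  have h2 := (h1.comp_sub_left t).symm
  simp only [sub_zero, sub_self] at h2
  exact h2.mul_continuousOn hf.continuousOn

lemma key_ineq (β : ℝ) (hβ : β ∈ Set.Ioo (0:ℝ) 1) (x : ℝ → ℝ) (hx : ContDiff ℝ 1 x)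
    (t : ℝ) (ht : 0 ≤ t) :
    ∫ s in (0:ℝ)..t, (t - s) ^ (-β) * (x s * deriv x s) ≤
      x t * ∫ s in (0:ℝ)..t, (t - s) ^ (-β) * deriv x s := by
  obtain ⟨hb0, hb1⟩ := hβ
  have hd : Differentiable ℝ x := hx.differentiable (by norm_num)
  have hc : Continuous (deriv x) := hx.continuous_deriv (by norm_num)
  have i1 := kernel_int β ⟨hb0, hb1⟩ t (fun s => x s * deriv x s) (hd.continuous.mul hc)
  have i2 := kernel_int β ⟨hb0, hb1⟩ t (deriv x) hc
  have i3 := kernel_int β ⟨hb0, hb1⟩ t (fun s => (x s - x t) * deriv x s)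
    ((hd.continuous.sub continuous_const).mul hc)
  have hcd : Continuous (dslope x t) := by
    rw [← continuousOn_univ]
    exact (continuousOn_dslope Filter.univ_mem).2 ⟨hd.continuous.continuousOn, hd t⟩
  let F : ℝ → ℝ := fun s => (t - s) ^ (-β) * ((x s - x t) ^ 2 / 2)
  have hF : ContinuousOn F (Set.Icc 0 t) := by
    have h1 : Continuous (fun s => (t - s) ^ (2 - β) * (dslope x t s ^ 2 / 2)) := by
      refine Continuous.mul ?_ (by fun_prop)
      exact (continuous_const.sub continuous_id).rpow_const (fun s => Or.inr (by linarith))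
    refine h1.continuousOn.congr ?_
    intro s hs
    have h2 : x s - x t = (s - t) * dslope x t s := by
      have := sub_smul_dslope x t s
      simpa using this.symm
    rcases eq_or_lt_of_le hs.2 with h | h
    · subst h
      simp [F, Real.zero_rpow (show (2 - β) ≠ 0 by linarith)]
    · have h3 : (t - s) ^ (2 - β) = (t - s) ^ (-β) * (t - s) ^ 2 := by
        rw [show 2 - β = -β + (2:ℕ) by push_cast; ring, Real.rpow_add_natCast (by linarith)]
      simp only [F]
      rw [h2, h3]
      ring
  have main := integral_le_sub_of_hasDeriv_right_of_le (g := F)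
    (g' := fun s => (-1 * (-β) * (t - s) ^ (-β - 1)) * ((x s - x t) ^ 2 / 2) +
      (t - s) ^ (-β) * ((x s - x t) * deriv x s))
    (φ := fun s => (t - s) ^ (-β) * ((x s - x t) * deriv x s)) ht hF
    (by
      intro s hs
      have hs' : t - s ≠ 0 := by linarith [hs.2]
      have d1 : HasDerivAt (fun s => t - s) (-1) s := by
        simpa using (hasDerivAt_id s).const_sub t
      have d2 := d1.rpow_const (p := -β) (Or.inl hs')
      have d3 : HasDerivAt (fun s => (x s - x t) ^ 2 / 2) ((x s - x t) * deriv x s) s := by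
        have := (((hd s).hasDerivAt.sub_const (x t)).pow 2).div_const 2
        refine HasDerivAt.congr_deriv this ?_
        simp only [Nat.cast_ofNat]
        ring
      exact (d2.mul d3).hasDerivWithinAt)
    (by rwa [integrableOn_Icc_iff_integrableOn_Ioc, ← intervalIntegrable_iff_integrableOn_Ioc_of_le ht])
    (by
      intro s hs
      have : 0 ≤ (t - s) ^ (-β - 1) := Real.rpow_nonneg (by linarith [hs.2]) _
      have : 0 ≤ (-1 * (-β) * (t - s) ^ (-β - 1)) * ((x s - x t) ^ 2 / 2) := by
        have : 0 ≤ -1 * -β := by linarith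
        positivity
      linarith)
  have hFt : F t = 0 := by simp [F]
  have hF0 : 0 ≤ F 0 := by
    have : 0 ≤ (t - 0) ^ (-β) := Real.rpow_nonneg (by linarith) _
    simp only [F]
    positivity
  have e : ∫ s in (0:ℝ)..t, (t - s) ^ (-β) * ((x s - x t) * deriv x s) =
      (∫ s in (0:ℝ)..t, (t - s) ^ (-β) * (x s * deriv x s)) -
        x t * ∫ s in (0:ℝ)..t, (t - s) ^ (-β) * deriv x s := by
    rw [← intervalIntegral.integral_const_mul, ← intervalIntegral.integral_sub i1 (i2.const_mul _)]
    congr 1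
    ext s
    ring
  linarith

/-- Passivity of a fractional order mass–spring–damper system (Example 2):
if `D^β x₁ = x₂` and `D^β x₂ = −a·x₁ − k·x₂ + u`, then the storage function
`V = (1/2)a·x₁² + (1/2)x₂²` satisfies `(D^β V)(t) ≤ u(t)·x₂(t)` for all `t ≥ 0`. -/
theorem stmt_17 (β a k : ℝ) (hβ : β ∈ Set.Ioo (0:ℝ) 1) (ha : 0 < a) (hk : 0 < k)
    (x₁ x₂ : ℝ → ℝ) (hx₁ : ContDiff ℝ 1 x₁) (hx₂ : ContDiff ℝ 1 x₂)
    (u : ℝ → ℝ) (hu : Continuous u)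
    (hdyn₁ : ∀ t ≥ (0:ℝ), caputo β x₁ t = x₂ t)
    (hdyn₂ : ∀ t ≥ (0:ℝ), caputo β x₂ t = -a * x₁ t - k * x₂ t + u t) :
    ∀ t ≥ (0:ℝ),
      caputo β (fun s => (1 / 2) * a * x₁ s ^ 2 + (1 / 2) * x₂ s ^ 2) t ≤
        u t * x₂ t := by
  intro t ht
  have hd₁ : Differentiable ℝ x₁ := hx₁.differentiable (by norm_num)
  have hc₁ : Continuous (deriv x₁) := hx₁.continuous_deriv (by norm_num)
  have hd₂ : Differentiable ℝ x₂ := hx₂.differentiable (by norm_num)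
  have hc₂ : Continuous (deriv x₂) := hx₂.continuous_deriv (by norm_num)
  have i1 := kernel_int β hβ t (fun s => x₁ s * deriv x₁ s) (hd₁.continuous.mul hc₁)
  have i2 := kernel_int β hβ t (fun s => x₂ s * deriv x₂ s) (hd₂.continuous.mul hc₂)
  have k1 := key_ineq β hβ x₁ hx₁ t ht
  have k2 := key_ineq β hβ x₂ hx₂ t ht
  have e1 := hdyn₁ t ht
  have e2 := hdyn₂ t ht
  have hG : 0 < 1 / Real.Gamma (1 - β) :=
    one_div_pos.2 (Real.Gamma_pos_of_pos (by linarith [hβ.2]))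
  have hder : ∀ s, deriv (fun s => (1 / 2) * a * x₁ s ^ 2 + (1 / 2) * x₂ s ^ 2) s =
      a * (x₁ s * deriv x₁ s) + x₂ s * deriv x₂ s := by
    intro s
    have h := (((hd₁ s).hasDerivAt.pow 2).const_mul ((1 / 2) * a)).add
      (((hd₂ s).hasDerivAt.pow 2).const_mul (1 / 2))
    refine Eq.trans h.deriv ?_
    push_cast
    ring
  have e : ∫ s in (0:ℝ)..t, (t - s) ^ (-β) *
      deriv (fun s => (1 / 2) * a * x₁ s ^ 2 + (1 / 2) * x₂ s ^ 2) s =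
      a * (∫ s in (0:ℝ)..t, (t - s) ^ (-β) * (x₁ s * deriv x₁ s)) +
        ∫ s in (0:ℝ)..t, (t - s) ^ (-β) * (x₂ s * deriv x₂ s) := by
    rw [← intervalIntegral.integral_const_mul, ← intervalIntegral.integral_add (i1.const_mul _) i2]
    congr 1
    ext s
    rw [hder]
    ring
  unfold caputo at e1 e2 ⊢
  rw [e]
  set G := 1 / Real.Gamma (1 - β)
  have k1' := mul_le_mul_of_nonneg_left (mul_le_mul_of_nonneg_left k1 ha.le) hG.le
  have k2' := mul_le_mul_of_nonneg_left k2 hG.le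
  have f1 := congrArg (fun z => a * x₁ t * z) e1
  have f2 := congrArg (fun z => x₂ t * z) e2
  have : 0 ≤ k * x₂ t ^ 2 := by positivity
  linarith
end
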